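/- The second derivative of the piecewise density P has a finite discontinuity at l = a: the derivative function P′ is not differentiable at l = a. Equivalently, the second derivative of the polynomial piece P₁ at l = a differs from the limit as l → a⁺ of the second derivative of P₂. -/

import Mathlib

open MeasureTheory Real Set Filter Topology

/-- The density of separations on the range `0 ≤ l ≤ a`. -/
noncomputable def P₁ (a l : ℝ) : ℝ :=
  l ^ 2 * (4 * π * a ^ 3 - 6 * π * a ^ 2 * l + 8 * a * l ^ 2 - l ^ 3) / a ^ 6

/-- The density of separations on the range `a ≤ l ≤ √2·a`. -/
noncomputable def P₂ (a l : ℝ) : ℝ :=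
  l / a ^ 6 *
    (2 * l ^ 4 + 6 * a ^ 2 * l ^ 2 - a ^ 4 - 2 * π * a ^ 3 * (4 * l - 3 * a)
      - 8 * a * (2 * l ^ 2 + a ^ 2) * Real.sqrt (l ^ 2 - a ^ 2)
      + 24 * a ^ 2 * l ^ 2 * Real.arccos (a / l))


/-- The piecewise density: `P₁` on `[0,a]` and `P₂` on `[a, √2·a]`. -/
noncomputable def P (a l : ℝ) : ℝ :=
  if l ≤ a then P₁ a l else P₂ a l

/-!
Differentiating `p + q √(l² - a²) + r arccos (a / l)` produces the potentially singular term
`(q l + r a / l) / √(l² - a²)`. For `P₂` and again for `P₂'` the numerator is divisible by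
`l² - a²`, so both derivatives stay bounded as `l → a⁺`. Evaluating at `l = a` gives the one-sided
limits `(76 - 28π) / a³` and `(76 - 16π) / a³` of `P''`; as a derivative cannot have a jump
discontinuity, `P'` is not differentiable at `a`.
-/

theorem eventually_eventuallyEq_nhds_of_nhdsWithin {X Y : Type*} [TopologicalSpace X] {f g : X → Y}
    {s : Set X} {a : X} (hs : IsOpen s) (h : f =ᶠ[𝓝[s] a] g) :
    ∀ᶠ x in 𝓝[s] a, f =ᶠ[𝓝 x] g := by
  filter_upwards [eventually_eventually_nhdsWithin.2 h, self_mem_nhdsWithin] with x hx hxs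
  rwa [hs.nhdsWithin_eq hxs] at hx

section OneSidedLimits

variable {E : Type*} [NormedAddCommGroup E] [NormedSpace ℝ E] {f : ℝ → E} {a : ℝ} {e : E}

theorem deriv_eq_of_tendsto_deriv_left (hfa : DifferentiableAt ℝ f a)
    (hf : ∀ᶠ x in 𝓝[<] a, DifferentiableAt ℝ f x) (hlim : Tendsto (deriv f) (𝓝[<] a) (𝓝 e)) :
    deriv f a = e :=
  (uniqueDiffOn_Iic a a self_mem_Iic).eq_deriv _ hfa.hasDerivAt.hasDerivWithinAt
    (hasDerivWithinAt_Iic_of_tendsto_deriv (fun _ hx => hx.differentiableWithinAt)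
      hfa.continuousAt.continuousWithinAt hf hlim)

theorem deriv_eq_of_tendsto_deriv_right (hfa : DifferentiableAt ℝ f a)
    (hf : ∀ᶠ x in 𝓝[>] a, DifferentiableAt ℝ f x) (hlim : Tendsto (deriv f) (𝓝[>] a) (𝓝 e)) :
    deriv f a = e :=
  (uniqueDiffOn_Ici a a self_mem_Ici).eq_deriv _ hfa.hasDerivAt.hasDerivWithinAt
    (hasDerivWithinAt_Ici_of_tendsto_deriv (fun _ hx => hx.differentiableWithinAt)
      hfa.continuousAt.continuousWithinAt hf hlim)

theorem not_differentiableAt_of_eventuallyEq_of_tendsto_deriv_ne {g h : ℝ → E} {e' : E}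
    (hfg : f =ᶠ[𝓝[<] a] g) (hfh : f =ᶠ[𝓝[>] a] h)
    (hg : ∀ᶠ x in 𝓝[<] a, DifferentiableAt ℝ g x) (hh : ∀ᶠ x in 𝓝[>] a, DifferentiableAt ℝ h x)
    (hglim : Tendsto (deriv g) (𝓝[<] a) (𝓝 e)) (hhlim : Tendsto (deriv h) (𝓝[>] a) (𝓝 e'))
    (hne : e ≠ e') : ¬ DifferentiableAt ℝ f a := by
  intro hfa
  have hfg_nhds := eventually_eventuallyEq_nhds_of_nhdsWithin isOpen_Iio hfg
  have hfh_nhds := eventually_eventuallyEq_nhds_of_nhdsWithin isOpen_Ioi hfh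
  have hleft : deriv f a = e := deriv_eq_of_tendsto_deriv_left hfa
    (hg.mp <| hfg_nhds.mono fun _ hx hgx => hgx.congr_of_eventuallyEq hx)
    (hglim.congr' <| hfg_nhds.mono fun _ hx => hx.deriv_eq.symm)
  have hright : deriv f a = e' := deriv_eq_of_tendsto_deriv_right hfa
    (hh.mp <| hfh_nhds.mono fun _ hx hhx => hhx.congr_of_eventuallyEq hx)
    (hhlim.congr' <| hfh_nhds.mono fun _ hx => hx.deriv_eq.symm)
  exact hne (hleft.symm.trans hright)

end OneSidedLimits

theorem hasDerivAt_sqrt_sq_sub {c x : ℝ} (hx : x ^ 2 ≠ c) :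
    HasDerivAt (fun y => √(y ^ 2 - c)) (x / √(x ^ 2 - c)) x := by
  refine (((hasDerivAt_pow 2 x).sub_const c).sqrt (sub_ne_zero.2 hx)).congr_deriv ?_
  rw [Nat.cast_ofNat, pow_one, mul_div_mul_left _ _ two_ne_zero]

theorem sqrt_one_sub_div_sq (a : ℝ) {x : ℝ} (hx : x ≠ 0) :
    √(1 - (a / x) ^ 2) = √(x ^ 2 - a ^ 2) / |x| := by
  rw [← sqrt_sq_eq_abs, ← sqrt_div' _ (sq_nonneg x), sub_div, div_self (pow_ne_zero 2 hx), div_pow]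

theorem hasDerivAt_arccos_div {a x : ℝ} (hx : x ≠ 0) (hxa : x ^ 2 ≠ a ^ 2) :
    HasDerivAt (fun y => arccos (a / y)) (a / (|x| * √(x ^ 2 - a ^ 2))) x := by
  have hneg : a / x ≠ -1 := fun h => hxa <| by rw [(div_eq_iff hx).1 h]; ring
  have hone : a / x ≠ 1 := fun h => hxa <| by rw [(div_eq_iff hx).1 h]; ring
  have hdiv : HasDerivAt (fun y => a / y) (a * -(x ^ 2)⁻¹) x := (hasDerivAt_inv hx).const_mul a
  refine ((hasDerivAt_arccos hneg hone).comp x hdiv).congr_deriv ?_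
  rw [sqrt_one_sub_div_sq a hx, ← sq_abs x]
  field_simp

-- `hc` makes the terms in `1 / √(x² - a²)` add up to `c * √(x² - a²)`.
theorem hasDerivAt_add_mul_sqrt_add_mul_arccos {p q r : ℝ → ℝ} {a x p' q' r' c : ℝ}
    (hx : |a| < x) (hp : HasDerivAt p p' x) (hq : HasDerivAt q q' x) (hr : HasDerivAt r r' x)
    (hc : q x * x ^ 2 + r x * a = c * x * (x ^ 2 - a ^ 2)) :
    HasDerivAt (fun y => p y + q y * √(y ^ 2 - a ^ 2) + r y * arccos (a / y))
      (p' + (q' + c) * √(x ^ 2 - a ^ 2) + r' * arccos (a / x)) x := by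
  have hx0 : 0 < x := (abs_nonneg a).trans_lt hx
  have hsq : a ^ 2 < x ^ 2 := sq_lt_sq.2 (hx.trans_le (le_abs_self x))
  have hsqrt := hasDerivAt_sqrt_sq_sub hsq.ne'
  have harccos := hasDerivAt_arccos_div hx0.ne' hsq.ne'
  have hcancel : q x * (x / √(x ^ 2 - a ^ 2)) + r x * (a / (|x| * √(x ^ 2 - a ^ 2)))
      = c * √(x ^ 2 - a ^ 2) := by
    have hs : √(x ^ 2 - a ^ 2) ≠ 0 := (sqrt_pos.2 (sub_pos.2 hsq)).ne'
    rw [abs_of_pos hx0]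
    field_simp [hs]
    rw [sq_sqrt (sub_pos.2 hsq).le]
    linear_combination hc
  refine ((hp.add (hq.mul hsqrt)).add (hr.mul harccos)).congr_deriv ?_
  linear_combination hcancel

theorem deriv_P₁ (a : ℝ) :
    deriv (P₁ a) = fun l => (8 * π * a ^ 3 * l - 18 * π * a ^ 2 * l ^ 2 + 32 * a * l ^ 3
      - 5 * l ^ 4) / a ^ 6 := by
  funext l
  refine HasDerivAt.deriv <| (((hasDerivAt_pow 2 l).mul
    (((((hasDerivAt_id' l).const_mul (6 * π * a ^ 2)).const_sub (4 * π * a ^ 3)).fun_add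
      ((hasDerivAt_pow 2 l).const_mul (8 * a))).fun_sub (hasDerivAt_pow 3 l))).div_const
        (a ^ 6)).congr_deriv ?_
  push_cast
  ring

theorem differentiable_deriv_P₁ (a : ℝ) : Differentiable ℝ (deriv (P₁ a)) := by
  rw [deriv_P₁]
  fun_prop

theorem deriv_deriv_P₁ (a : ℝ) :
    deriv (deriv (P₁ a)) = fun l => (8 * π * a ^ 3 - 36 * π * a ^ 2 * l + 96 * a * l ^ 2
      - 20 * l ^ 3) / a ^ 6 := by
  funext l
  rw [deriv_P₁]
  refine HasDerivAt.deriv <| ((((((hasDerivAt_id' l).const_mul (8 * π * a ^ 3)).sub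
    ((hasDerivAt_pow 2 l).const_mul (18 * π * a ^ 2))).add
      ((hasDerivAt_pow 3 l).const_mul (32 * a))).sub
        ((hasDerivAt_pow 4 l).const_mul 5)).div_const (a ^ 6)).congr_deriv ?_
  push_cast
  ring

theorem continuous_deriv_deriv_P₁ (a : ℝ) : Continuous (deriv (deriv (P₁ a))) := by
  rw [deriv_deriv_P₁]
  fun_prop

theorem deriv_deriv_P₁_self (a : ℝ) : deriv (deriv (P₁ a)) a = (76 - 28 * π) / a ^ 3 := by
  rw [deriv_deriv_P₁]
  rcases eq_or_ne a 0 with rfl | ha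
  · simp
  · field_simp
    ring

theorem hasDerivAt_P₂ {a l : ℝ} (hl : |a| < l) :
    HasDerivAt (P₂ a) ((10 * l ^ 4 + 18 * a ^ 2 * l ^ 2 - a ^ 4 - 16 * π * a ^ 3 * l
      + 6 * π * a ^ 4 + -8 * a * (8 * l ^ 2 + a ^ 2) * √(l ^ 2 - a ^ 2)
      + 72 * a ^ 2 * l ^ 2 * arccos (a / l)) / a ^ 6) l := by
  have hp : HasDerivAt (fun x => 2 * x ^ 5 + 6 * a ^ 2 * x ^ 3 - a ^ 4 * x
      - 2 * π * a ^ 3 * (4 * x ^ 2 - 3 * a * x))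
      (10 * l ^ 4 + 18 * a ^ 2 * l ^ 2 - a ^ 4 - 16 * π * a ^ 3 * l + 6 * π * a ^ 4) l := by
    refine (((((hasDerivAt_pow 5 l).const_mul 2).add
      ((hasDerivAt_pow 3 l).const_mul (6 * a ^ 2))).sub
        ((hasDerivAt_id' l).const_mul (a ^ 4))).sub
          ((((hasDerivAt_pow 2 l).const_mul 4).sub
            ((hasDerivAt_id' l).const_mul (3 * a))).const_mul (2 * π * a ^ 3))).congr_deriv ?_
    push_cast
    ring
  have hq : HasDerivAt (fun x => -8 * a * (2 * x ^ 3 + a ^ 2 * x))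
      (-8 * a * (6 * l ^ 2 + a ^ 2)) l := by
    refine ((((hasDerivAt_pow 3 l).const_mul 2).add
      ((hasDerivAt_id' l).const_mul (a ^ 2))).const_mul (-8 * a)).congr_deriv ?_
    push_cast
    ring
  have hr : HasDerivAt (fun x => 24 * a ^ 2 * x ^ 3) (72 * a ^ 2 * l ^ 2) l := by
    refine ((hasDerivAt_pow 3 l).const_mul (24 * a ^ 2)).congr_deriv ?_
    push_cast
    ring
  have hsum := hasDerivAt_add_mul_sqrt_add_mul_arccos (c := -16 * a * l ^ 2) hl hp hq hr (by ring)
  have hP₂ := (hsum.div_const (a ^ 6)).congr_of_eventuallyEq (f₁ := P₂ a) <|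
    .of_forall fun x => by unfold P₂; ring
  exact hP₂.congr_deriv (by ring)

theorem hasDerivAt_deriv_P₂ {a l : ℝ} (hl : |a| < l) :
    HasDerivAt (deriv (P₂ a)) ((40 * l ^ 3 + 36 * a ^ 2 * l - 16 * π * a ^ 3
      - 192 * a * l * √(l ^ 2 - a ^ 2) + 144 * a ^ 2 * l * arccos (a / l)) / a ^ 6) l := by
  have hp : HasDerivAt (fun x => 10 * x ^ 4 + 18 * a ^ 2 * x ^ 2 - a ^ 4 - 16 * π * a ^ 3 * x
      + 6 * π * a ^ 4) (40 * l ^ 3 + 36 * a ^ 2 * l - 16 * π * a ^ 3) l := by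
    refine ((((((hasDerivAt_pow 4 l).const_mul 10).add
      ((hasDerivAt_pow 2 l).const_mul (18 * a ^ 2))).sub_const (a ^ 4)).sub
        ((hasDerivAt_id' l).const_mul (16 * π * a ^ 3))).add_const (6 * π * a ^ 4)).congr_deriv ?_
    push_cast
    ring
  have hq : HasDerivAt (fun x => -8 * a * (8 * x ^ 2 + a ^ 2)) (-128 * a * l) l := by
    refine ((((hasDerivAt_pow 2 l).const_mul 8).add_const (a ^ 2)).const_mul
      (-8 * a)).congr_deriv ?_
    push_cast
    ring
  have hr : HasDerivAt (fun x => 72 * a ^ 2 * x ^ 2) (144 * a ^ 2 * l) l := by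
    refine ((hasDerivAt_pow 2 l).const_mul (72 * a ^ 2)).congr_deriv ?_
    push_cast
    ring
  have hsum := hasDerivAt_add_mul_sqrt_add_mul_arccos (c := -64 * a * l) hl hp hq hr (by ring)
  have hderiv := (hsum.div_const (a ^ 6)).congr_of_eventuallyEq (f₁ := deriv (P₂ a)) <| by
    filter_upwards [Ioi_mem_nhds hl] with x hx using (hasDerivAt_P₂ hx).deriv
  exact hderiv.congr_deriv (by ring)

theorem tendsto_deriv_deriv_P₂ {a : ℝ} (ha : 0 < a) :
    Tendsto (deriv (deriv (P₂ a))) (𝓝[>] a) (𝓝 ((76 - 16 * π) / a ^ 3)) := by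
  have hcont : ContinuousAt (fun l => (40 * l ^ 3 + 36 * a ^ 2 * l - 16 * π * a ^ 3
      - 192 * a * l * √(l ^ 2 - a ^ 2) + 144 * a ^ 2 * l * arccos (a / l)) / a ^ 6) a := by
    fun_prop (disch := exact ha.ne')
  have hval : (40 * a ^ 3 + 36 * a ^ 2 * a - 16 * π * a ^ 3 - 192 * a * a * √(a ^ 2 - a ^ 2)
      + 144 * a ^ 2 * a * arccos (a / a)) / a ^ 6 = (76 - 16 * π) / a ^ 3 := by
    rw [sub_self, sqrt_zero, div_self ha.ne', arccos_one]
    field_simp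
    ring
  rw [← hval]
  refine (hcont.tendsto.mono_left nhdsWithin_le_nhds).congr' ?_
  filter_upwards [self_mem_nhdsWithin] with l hl
  exact (hasDerivAt_deriv_P₂ ((abs_of_pos ha).trans_lt hl)).deriv.symm

theorem deriv_P_eventuallyEq_left (a : ℝ) : deriv (P a) =ᶠ[𝓝[<] a] deriv (P₁ a) := by
  have hP : EqOn (P a) (P₁ a) (Iio a) := fun _ hl => if_pos (le_of_lt hl)
  exact eventuallyEq_nhdsWithin_of_eqOn (hP.deriv isOpen_Iio)

theorem deriv_P_eventuallyEq_right (a : ℝ) : deriv (P a) =ᶠ[𝓝[>] a] deriv (P₂ a) := by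
  have hP : EqOn (P a) (P₂ a) (Ioi a) := fun _ hl => if_neg (not_le_of_gt hl)
  exact eventuallyEq_nhdsWithin_of_eqOn (hP.deriv isOpen_Ioi)

theorem second_deriv_discontinuous_at_a (a : ℝ) (ha : 0 < a) :
    ¬ DifferentiableAt ℝ (deriv (P a)) a ∧
    ∃ L : ℝ, Tendsto (fun l => deriv (deriv (P₂ a)) l) (𝓝[>] a) (𝓝 L) ∧
      deriv (deriv (P₁ a)) a ≠ L := by
  have hne : deriv (deriv (P₁ a)) a ≠ (76 - 16 * π) / a ^ 3 := by
    rw [deriv_deriv_P₁_self, Ne, div_left_inj' (pow_pos ha 3).ne']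
    linarith [pi_pos]
  have hdiff₂ : ∀ᶠ l in 𝓝[>] a, DifferentiableAt ℝ (deriv (P₂ a)) l := by
    filter_upwards [self_mem_nhdsWithin] with l hl
    exact (hasDerivAt_deriv_P₂ ((abs_of_pos ha).trans_lt hl)).differentiableAt
  have hlim₁ : Tendsto (deriv (deriv (P₁ a))) (𝓝[<] a) (𝓝 (deriv (deriv (P₁ a)) a)) :=
    (continuous_deriv_deriv_P₁ a).continuousWithinAt
  have hlim₂ := tendsto_deriv_deriv_P₂ ha
  refine ⟨?_, _, hlim₂, hne⟩
  exact not_differentiableAt_of_eventuallyEq_of_tendsto_deriv_ne (deriv_P_eventuallyEq_left a)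
    (deriv_P_eventuallyEq_right a) (.of_forall (differentiable_deriv_P₁ a)) hdiff₂ hlim₁ hlim₂ hne
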